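/- Evidence-centric criterion for protection: let D = C(t,p,φ,e) be the data flow semantics of a Copland phrase. If every cross-place communication event v of D satisfies τ(ε(v)) ⊆ {ϱ(v)}, then D is protected. -/

import Mathlib

namespace Copland

/-- Places are drawn from a countable set. -/
abbrev Place := ℕ
/-- Symbols (measurement/target identifiers) are drawn from a countable set. -/
abbrev Symb := ℕ

/-- Splitting specifications: `+` or `-`. -/
inductive Split where
  | plus
  | minus
deriving DecidableEq, Repr

/-- Copland phrases. -/
inductive Phrase where
  | meas : Symb → Place → Symb → Phrase          -- measurement  m q s
  | att  : Place → Phrase → Phrase               -- @_q [ t ]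
  | copy : Phrase                                 -- _
  | sign : Phrase                                 -- !
  | hash : Phrase                                 -- #
  | lseq : Phrase → Phrase → Phrase               -- t1 → t2
  | bseq : Split → Split → Phrase → Phrase → Phrase  -- t1 d1<d2 t2
  | bpar : Split → Split → Phrase → Phrase → Phrase  -- t1 d1~d2 t2
deriving DecidableEq, Repr

/-- Evidence terms. -/
inductive Evidence where
  | empty : Evidence                                          -- ξ
  | meas : Symb → Place → Symb → Place → List ℕ → Evidence → Evidence  -- m(ms(m,q,s),p,φ,e)
  | sig  : Evidence → Place → Evidence                        -- [[e]]_p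
  | hash : Evidence → Place → Evidence                        -- #{e}_p
  | seqc : Evidence → Evidence → Evidence                     -- e1 ;; e2
  | parc : Evidence → Evidence → Evidence                     -- e1 || e2
deriving DecidableEq, Repr

/-- The effect `d(e)` of a splitting specification on evidence. -/
def splitEv : Split → Evidence → Evidence
  | .plus, e => e
  | .minus, _ => .empty

/-- The Copland evidence semantics `E(t,p,φ,e)`. -/
def eval : Phrase → Place → List ℕ → Evidence → Evidence
  | .meas m q s, p, φ, e => .meas m q s p φ e
  | .copy, _, _, e => e
  | .sign, p, _, e => .sig e p
  | .hash, p, _, e => .hash e p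
  | .att q t, _, φ, e => eval t q (1 :: φ) e
  | .lseq t1 t2, p, φ, e => eval t2 p (2 :: φ) (eval t1 p (1 :: φ) e)
  | .bseq d1 d2 t1 t2, p, φ, e =>
      .seqc (eval t1 p (1 :: φ) (splitEv d1 e)) (eval t2 p (2 :: φ) (splitEv d2 e))
  | .bpar d1 d2 t1 t2, p, φ, e =>
      .parc (eval t1 p (1 :: φ) (splitEv d1 e)) (eval t2 p (2 :: φ) (splitEv d2 e))

/-- Join operators: sequential `<` or parallel `~`. -/
inductive JoinOp where
  | seqJ
  | parJ
deriving DecidableEq, Repr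

/-- Event labels. -/
inductive Label where
  | msp   : Place → Evidence → Label                    -- p : msp(e)
  | cpy   : Place → Evidence → Label                    -- p : cpy(e)
  | sig   : Place → Evidence → Label                    -- p : sig(e)
  | hsh   : Place → Evidence → Label                    -- p : hsh(e)
  | req   : Place → Place → Evidence → Label            -- p : req(q,e)
  | rpy   : Place → Place → Evidence → Label            -- p : rpy(q,e)
  | split : Place → Split → Split → Evidence → Label    -- p : split(d1,d2,e)
  | join  : Place → JoinOp → Evidence → Label           -- p : join(o,e)
deriving DecidableEq, Repr

/-- The (sending) place `ϱ(v)`: the place before the colon in the label. -/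
def Label.place : Label → Place
  | .msp p _ => p
  | .cpy p _ => p
  | .sig p _ => p
  | .hsh p _ => p
  | .req p _ _ => p
  | .rpy p _ _ => p
  | .split p _ _ _ => p
  | .join p _ _ => p

/-- The receiving place `ϱ'(v)`. -/
def Label.recvPlace : Label → Place
  | .req _ q _ => q
  | .rpy _ q _ => q
  | l => l.place

/-- The evidence `ε(v)`: the last argument of the label. -/
def Label.evid : Label → Evidence
  | .msp _ e => e
  | .cpy _ e => e
  | .sig _ e => e
  | .hsh _ e => e
  | .req _ _ e => e
  | .rpy _ _ e => e
  | .split _ _ _ e => e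
  | .join _ _ e => e

/-- A measurement event is one whose label has the form `p : msp(e)`. -/
def Label.IsMeas (l : Label) : Prop := ∃ p e, l = .msp p e

/-- A cross-place communication event is one with `ϱ(v) ≠ ϱ'(v)`. -/
def Label.IsCross (l : Label) : Prop := l.place ≠ l.recvPlace

/-- A data flow graph: events are the naturals `0, …, n-1`, with an input event,
an output event, flow edges, and a labeling. -/
structure DFG where
  n : ℕ
  vin : ℕ
  vout : ℕ
  edges : List (ℕ × ℕ)
  label : ℕ → Label

namespace DFG

/-- Well-formedness of a data flow graph: events are in range, the flow
relation is acyclic, and there is no edge into the input event nor out of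
the output event. -/
def WF (G : DFG) : Prop :=
  G.vin < G.n ∧ G.vout < G.n ∧
  (∀ pr ∈ G.edges, pr.1 < G.n ∧ pr.2 < G.n) ∧
  (∀ v, ¬ Relation.TransGen (fun a b => (a, b) ∈ G.edges) v v) ∧
  (∀ pr ∈ G.edges, pr.2 ≠ G.vin ∧ pr.1 ≠ G.vout)

/-- The single-event data flow graph. -/
def single (l : Label) : DFG :=
  { n := 1, vin := 0, vout := 0, edges := [], label := fun _ => l }

/-- Before-copy composition: the second graph's events are renumbered after the
first's, and a flow edge links the output of the first to the input of the second. -/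
def seqComp (G1 G2 : DFG) : DFG :=
  { n := G1.n + G2.n
    vin := G1.vin
    vout := G1.n + G2.vout
    edges := G1.edges ++ G2.edges.map (fun pr => (G1.n + pr.1, G1.n + pr.2)) ++
      [(G1.vout, G1.n + G2.vin)]
    label := fun i => if i < G1.n then G1.label i else G2.label (i - G1.n) }

/-- Branching composition: a split event, the two subgraphs (with a flow edge from
the split into the input of a subgraph exactly when the corresponding splitting
specification is `+`), and a join event receiving flow from both outputs. -/
def branch (sp jn : Label) (d1 d2 : Split) (G1 G2 : DFG) : DFG :=
  { n := G1.n + G2.n + 2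
    vin := 0
    vout := G1.n + G2.n + 1
    edges :=
      G1.edges.map (fun pr => (pr.1 + 1, pr.2 + 1)) ++
      G2.edges.map (fun pr => (pr.1 + 1 + G1.n, pr.2 + 1 + G1.n)) ++
      (if d1 = Split.plus then [(0, G1.vin + 1)] else []) ++
      (if d2 = Split.plus then [(0, G2.vin + 1 + G1.n)] else []) ++
      [(G1.vout + 1, G1.n + G2.n + 1), (G2.vout + 1 + G1.n, G1.n + G2.n + 1)]
    label := fun i =>
      if i = 0 then sp
      else if i < G1.n + 1 then G1.label (i - 1)
      else if i < G1.n + G2.n + 1 then G2.label (i - 1 - G1.n)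
      else jn }

end DFG

/-- The Copland data flow semantics `C(t,p,φ,e)`. -/
def sem : Phrase → Place → List ℕ → Evidence → DFG
  | .meas m q s, p, φ, e => .single (.msp p (.meas m q s p φ e))
  | .copy, p, _, e => .single (.cpy p e)
  | .sign, p, _, e => .single (.sig p (.sig e p))
  | .hash, p, _, e => .single (.hsh p (.hash e p))
  | .att q t, p, φ, e =>
      (DFG.single (.req p q e)).seqComp
        ((sem t q (1 :: φ) e).seqComp (.single (.rpy q p (eval t q (1 :: φ) e))))
  | .lseq t1 t2, p, φ, e =>
      (sem t1 p (1 :: φ) e).seqComp (sem t2 p (2 :: φ) (eval t1 p (1 :: φ) e))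
  | .bseq d1 d2 t1 t2, p, φ, e =>
      DFG.branch (.split p d1 d2 e)
        (.join p .seqJ (eval (.bseq d1 d2 t1 t2) p φ e)) d1 d2
        (sem t1 p (1 :: φ) (splitEv d1 e)) (sem t2 p (2 :: φ) (splitEv d2 e))
  | .bpar d1 d2 t1 t2, p, φ, e =>
      DFG.branch (.split p d1 d2 e)
        (.join p .parJ (eval (.bpar d1 d2 t1 t2) p φ e)) d1 d2
        (sem t1 p (1 :: φ) (splitEv d1 e)) (sem t2 p (2 :: φ) (splitEv d2 e))

namespace DFG

/-- A path of a data flow graph: a nonempty sequence of events of the graph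
successively related by flow edges. -/
def IsPath (G : DFG) (π : List ℕ) : Prop :=
  π ≠ [] ∧ (∀ v ∈ π, v < G.n) ∧ π.Chain' (fun a b => (a, b) ∈ G.edges)

/-- One step of the tamper set computation. -/
def tsStep (G : DFG) (s : Set Place) (v : ℕ) : Set Place :=
  match G.label v with
  | .sig p _ => {p} ∩ s
  | _ => s

/-- The tamper set `ts(π)` of a path: `ts(⟨v⟩)` is the set of all places if `v` is a
measurement event and `∅` otherwise; `ts(π § v) = {p} ∩ ts(π)` if `ℓ(v) = p:sig(e)`,
and `ts(π § v) = ts(π)` otherwise. -/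
def ts (G : DFG) (π : List ℕ) : Set Place :=
  match π with
  | [] => ∅
  | v :: rest =>
      rest.foldl (tsStep G)
        (match G.label v with
          | .msp _ _ => Set.univ
          | _ => ∅)

/-- A path is `p`-signing iff every signature event on it occurs at `p`. -/
def Signing (G : DFG) (π : List ℕ) (p : Place) : Prop :=
  ∀ v ∈ π, ∀ q e, G.label v = .sig q e → q = p

/-- A path `π = ⟨v, …, v'⟩` permits tampering (at `v'` with the evidence from `v`)
iff (1) `v` is a measurement event, (2) the length of `π` exceeds 1, and
(3) `π` is `ϱ(v')`-signing or `ϱ'(v')`-signing. -/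
def PermitsTamper (G : DFG) (π : List ℕ) : Prop :=
  (∀ v, π.head? = some v → (G.label v).IsMeas) ∧
  1 < π.length ∧
  (∀ v', π.getLast? = some v' →
    G.Signing π (G.label v').place ∨ G.Signing π (G.label v').recvPlace)

/-- A path `⟨v1,…,vn⟩` is local to place `p` iff every interior event has both
sending and receiving place `p`, and each endpoint has sending or receiving place `p`. -/
def LocalTo (G : DFG) (π : List ℕ) (p : Place) : Prop :=
  (∀ i v, 0 < i → i + 1 < π.length → π[i]? = some v →
      (G.label v).place = p ∧ (G.label v).recvPlace = p) ∧
  (∀ v, π.head? = some v → (G.label v).place = p ∨ (G.label v).recvPlace = p) ∧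
  (∀ v, π.getLast? = some v → (G.label v).place = p ∨ (G.label v).recvPlace = p)

/-- `π` is a path of `G` from `v` to `v'`. -/
def PathBetween (G : DFG) (v v' : ℕ) (π : List ℕ) : Prop :=
  G.IsPath π ∧ π.head? = some v ∧ π.getLast? = some v'

/-- A set `S` of events of `G` is a tamper strategy for `v` iff every path from `v`
to the output event of `G` contains an event `v' ∈ S` such that the prefix
`⟨v, …, v'⟩` of the path permits tampering. -/
def TamperStrategy (G : DFG) (S : Set ℕ) (v : ℕ) : Prop :=
  (∀ w ∈ S, w < G.n) ∧
  ∀ π, G.PathBetween v G.vout π →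
    ∃ v' ∈ S, ∃ π', π' <+: π ∧ π'.getLast? = some v' ∧ G.PermitsTamper π'

/-- `S` is a minimal tamper strategy for `v` iff it is a tamper strategy for `v` and
every tamper strategy for `v` included in `S` equals `S`. -/
def MinimalTamperStrategy (G : DFG) (S : Set ℕ) (v : ℕ) : Prop :=
  G.TamperStrategy S v ∧ ∀ S', G.TamperStrategy S' v → S' ⊆ S → S' = S

/-- A path `π = ⟨v1,…,vn⟩` is protected iff either `v1` is not a measurement event,
or for every `1 < i ≤ n`, if `vi` is a cross-place communication event then
`ts(⟨v1,…,vi⟩) ⊆ {ϱ(vi)}`. -/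
def ProtectedPath (G : DFG) (π : List ℕ) : Prop :=
  (∀ v, π.head? = some v → ¬ (G.label v).IsMeas) ∨
  (∀ i v, 0 < i → i < π.length → π[i]? = some v → (G.label v).IsCross →
      G.ts (π.take (i + 1)) ⊆ {(G.label v).place})

/-- A data flow graph is protected iff all of its paths are protected. -/
def Protected (G : DFG) : Prop :=
  ∀ π, G.IsPath π → G.ProtectedPath π

end DFG

/-- The tamper places function `τ` on evidence. -/
def tau : Evidence → Set Place
  | .empty => ∅
  | .meas _ _ _ _ _ _ => Set.univ
  | .hash e _ => tau e
  | .sig e p => {p} ∩ tau e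
  | .seqc e1 e2 => tau e1 ∪ tau e2
  | .parc e1 e2 => tau e1 ∪ tau e2

open scoped Classical in
/-- The Evidence Protection Program `epp(t,p,e)`. -/
noncomputable def epp : Phrase → Place → Evidence → Phrase
  | .meas m q s, _, _ => .meas m q s
  | .copy, _, _ => .copy
  | .sign, _, _ => .sign
  | .hash, _, _ => .hash
  | .lseq t1 t2, p, e =>
      .lseq (epp t1 p e) (epp t2 p (eval (epp t1 p e) p [] e))
  | .att q t, p, e =>
      if q = p then .att q (epp t p e)
      else if tau e ⊆ {p} then
        if tau (eval (epp t q e) q [] e) ⊆ {q} then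
          .att q (epp t q e)
        else
          .att q (.lseq (epp t q e) .sign)
      else
        if tau (eval (epp t q (.sig e p)) q [] (.sig e p)) ⊆ {q} then
          .lseq .sign (.att q (epp t q (.sig e p)))
        else
          .lseq .sign (.att q (.lseq (epp t q (.sig e p)) .sign))
  | .bseq d1 d2 t1 t2, p, e =>
      .bseq d1 d2 (epp t1 p (splitEv d1 e)) (epp t2 p (splitEv d2 e))
  | .bpar d1 d2 t1 t2, p, e =>
      .bpar d1 d2 (epp t1 p (splitEv d1 e)) (epp t2 p (splitEv d2 e))

end Copland

namespace Copland

/-- The effect on a tamper set of extending a path by an event with the given label. -/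
def Label.restrict : Label → Set Place → Set Place
  | .sig p _, s => {p} ∩ s
  | _, s => s

theorem Label.restrict_mono (l : Label) {s s' : Set Place} (hs : s ⊆ s') :
    l.restrict s ⊆ l.restrict s' := by
  cases l <;> first | exact hs | exact Set.inter_subset_inter_right _ hs

theorem DFG.tsStep_eq_restrict (G : DFG) (s : Set Place) (v : ℕ) :
    G.tsStep s v = (G.label v).restrict s := by
  unfold DFG.tsStep Label.restrict
  cases G.label v <;> rfl

/-- Tamper sets are bounded by the tamper places of evidence throughout `G`, when the
evidence entering `G` has tamper places `s` and the evidence leaving it has `s'`. -/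
structure DFG.TamperSound (G : DFG) (s s' : Set Place) : Prop where
  vin_lt : G.vin < G.n
  vout_lt : G.vout < G.n
  edge_lt : ∀ {a b}, (a, b) ∈ G.edges → a < G.n ∧ b < G.n
  meas : ∀ {v}, v < G.n → (G.label v).IsMeas → tau (G.label v).evid = Set.univ
  edge : ∀ {a b}, (a, b) ∈ G.edges →
    (G.label b).restrict (tau (G.label a).evid) ⊆ tau (G.label b).evid
  input : (G.label G.vin).restrict s ⊆ tau (G.label G.vin).evid
  output : tau (G.label G.vout).evid ⊆ s'

namespace DFG.TamperSound

theorem single {l : Label} {s : Set Place}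
    (meas : l.IsMeas → tau l.evid = Set.univ) (input : l.restrict s ⊆ tau l.evid) :
    (DFG.single l).TamperSound s (tau l.evid) where
  vin_lt := Nat.zero_lt_one
  vout_lt := Nat.zero_lt_one
  edge_lt h := by simp [DFG.single] at h
  meas _ := meas
  edge h := by simp [DFG.single] at h
  input := input
  output := subset_rfl

theorem seqComp {G₁ G₂ : DFG} {s₀ s₁ s₂ : Set Place}
    (h₁ : G₁.TamperSound s₀ s₁) (h₂ : G₂.TamperSound s₁ s₂) :
    (G₁.seqComp G₂).TamperSound s₀ s₂ := by
  have label_left : ∀ {i}, i < G₁.n → (G₁.seqComp G₂).label i = G₁.label i :=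
    fun hi => if_pos hi
  have label_right : ∀ i, (G₁.seqComp G₂).label (G₁.n + i) = G₂.label i := fun i => by
    simp [DFG.seqComp]
  have edge_cases : ∀ {a b}, (a, b) ∈ (G₁.seqComp G₂).edges →
      (a, b) ∈ G₁.edges ∨
      (∃ a' b', (a', b') ∈ G₂.edges ∧ a = G₁.n + a' ∧ b = G₁.n + b') ∨
      (a = G₁.vout ∧ b = G₁.n + G₂.vin) := by
    intro a b h
    simp only [DFG.seqComp, List.mem_append, List.mem_map, List.mem_singleton,
      Prod.mk.injEq, Prod.exists] at h
    grind
  have hin := h₁.vin_lt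
  have hout := h₁.vout_lt
  have hin' := h₂.vin_lt
  have hout' := h₂.vout_lt
  have hn : (G₁.seqComp G₂).n = G₁.n + G₂.n := rfl
  refine ⟨?_, ?_, ?_, ?_, ?_, ?_, ?_⟩
  · exact Nat.lt_add_right _ hin
  · exact Nat.add_lt_add_left hout' _
  · intro a b hab
    rcases edge_cases hab with h | ⟨a', b', h, rfl, rfl⟩ | ⟨rfl, rfl⟩
    · have := h₁.edge_lt h
      omega
    · have := h₂.edge_lt h
      omega
    · omega
  · intro v hv
    rcases lt_or_ge v G₁.n with hlt | hge
    · rw [label_left hlt]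
      exact h₁.meas hlt
    · obtain ⟨w, rfl⟩ := Nat.exists_eq_add_of_le hge
      rw [label_right]
      exact h₂.meas (by omega)
  · intro a b hab
    rcases edge_cases hab with h | ⟨a', b', h, rfl, rfl⟩ | ⟨rfl, rfl⟩
    · rw [label_left (h₁.edge_lt h).1, label_left (h₁.edge_lt h).2]
      exact h₁.edge h
    · rw [label_right, label_right]
      exact h₂.edge h
    · rw [label_left hout, label_right]
      exact (Label.restrict_mono _ h₁.output).trans h₂.input
  · change ((G₁.seqComp G₂).label G₁.vin).restrict s₀ ⊆ tau ((G₁.seqComp G₂).label G₁.vin).evid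
    rw [label_left hin]
    exact h₁.input
  · change tau ((G₁.seqComp G₂).label (G₁.n + G₂.vout)).evid ⊆ s₂
    rw [label_right]
    exact h₂.output

theorem branch {G₁ G₂ : DFG} {sp jn : Label} {d₁ d₂ : Split}
    {s s₁ s₂ s₁' s₂' : Set Place}
    (h₁ : G₁.TamperSound s₁ s₁') (h₂ : G₂.TamperSound s₂ s₂')
    (sp_meas : ¬ sp.IsMeas) (jn_meas : ¬ jn.IsMeas)
    (sp_input : sp.restrict s ⊆ tau sp.evid)
    (jn_input : jn.restrict (s₁' ∪ s₂') ⊆ tau jn.evid)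
    (hd₁ : d₁ = .plus → tau sp.evid ⊆ s₁) (hd₂ : d₂ = .plus → tau sp.evid ⊆ s₂) :
    (DFG.branch sp jn d₁ d₂ G₁ G₂).TamperSound s (tau jn.evid) := by
  set G := DFG.branch sp jn d₁ d₂ G₁ G₂ with hG
  have label_split : G.label 0 = sp := rfl
  have label_left : ∀ {i}, i < G₁.n → G.label (i + 1) = G₁.label i := fun hi => by
    simp [hG, DFG.branch, hi]
  have label_right : ∀ {i}, i < G₂.n → G.label (i + 1 + G₁.n) = G₂.label i := fun {i} hi => by
    have hle : ¬ i + 1 + G₁.n < G₁.n + 1 := by omega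
    have hlt : i + 1 + G₁.n < G₁.n + G₂.n + 1 := by omega
    have hsub : i + 1 + G₁.n - 1 - G₁.n = i := by omega
    simp only [hG, DFG.branch, if_neg hle, if_pos hlt, hsub]
    simp
  have label_join : G.label (G₁.n + G₂.n + 1) = jn := by
    simp [hG, DFG.branch]
  have edge_cases : ∀ {a b}, (a, b) ∈ G.edges →
      (∃ a' b', (a', b') ∈ G₁.edges ∧ a = a' + 1 ∧ b = b' + 1) ∨
      (∃ a' b', (a', b') ∈ G₂.edges ∧ a = a' + 1 + G₁.n ∧ b = b' + 1 + G₁.n) ∨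
      (d₁ = .plus ∧ a = 0 ∧ b = G₁.vin + 1) ∨
      (d₂ = .plus ∧ a = 0 ∧ b = G₂.vin + 1 + G₁.n) ∨
      (a = G₁.vout + 1 ∧ b = G₁.n + G₂.n + 1) ∨
      (a = G₂.vout + 1 + G₁.n ∧ b = G₁.n + G₂.n + 1) := by
    intro a b h
    simp only [hG, DFG.branch, List.mem_append, List.mem_map, List.mem_cons,
      List.not_mem_nil, or_false, Prod.mk.injEq, Prod.exists] at h
    grind
  have hin := h₁.vin_lt
  have hout := h₁.vout_lt
  have hin' := h₂.vin_lt
  have hout' := h₂.vout_lt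
  have hn : G.n = G₁.n + G₂.n + 2 := rfl
  refine ⟨?_, ?_, ?_, ?_, ?_, ?_, ?_⟩
  · exact Nat.succ_pos _
  · exact Nat.lt_succ_self _
  · intro a b hab
    rcases edge_cases hab with ⟨a', b', h, rfl, rfl⟩ | ⟨a', b', h, rfl, rfl⟩ | ⟨-, rfl, rfl⟩ |
      ⟨-, rfl, rfl⟩ | ⟨rfl, rfl⟩ | ⟨rfl, rfl⟩
    · have := h₁.edge_lt h
      omega
    · have := h₂.edge_lt h
      omega
    all_goals omega
  · intro v hv
    have hcases : v = 0 ∨ (∃ i < G₁.n, v = i + 1) ∨ (∃ i < G₂.n, v = i + 1 + G₁.n) ∨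
        v = G₁.n + G₂.n + 1 := by
      by_cases h0 : v = 0
      · exact .inl h0
      by_cases hl : v < G₁.n + 1
      · exact .inr (.inl ⟨v - 1, by omega, by omega⟩)
      by_cases hr : v < G₁.n + G₂.n + 1
      · exact .inr (.inr (.inl ⟨v - 1 - G₁.n, by omega, by omega⟩))
      · exact .inr (.inr (.inr (by omega)))
    rcases hcases with rfl | ⟨i, hi, rfl⟩ | ⟨i, hi, rfl⟩ | rfl
    · rw [label_split]
      exact fun h => absurd h sp_meas
    · rw [label_left hi]
      exact h₁.meas hi
    · rw [label_right hi]
      exact h₂.meas hi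
    · rw [label_join]
      exact fun h => absurd h jn_meas
  · intro a b hab
    rcases edge_cases hab with ⟨a', b', h, rfl, rfl⟩ | ⟨a', b', h, rfl, rfl⟩ | ⟨hd, rfl, rfl⟩ |
      ⟨hd, rfl, rfl⟩ | ⟨rfl, rfl⟩ | ⟨rfl, rfl⟩
    · rw [label_left (h₁.edge_lt h).1, label_left (h₁.edge_lt h).2]
      exact h₁.edge h
    · rw [label_right (h₂.edge_lt h).1, label_right (h₂.edge_lt h).2]
      exact h₂.edge h
    · rw [label_split, label_left hin]
      exact (Label.restrict_mono _ (hd₁ hd)).trans h₁.input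
    · rw [label_split, label_right hin']
      exact (Label.restrict_mono _ (hd₂ hd)).trans h₂.input
    · rw [label_left hout, label_join]
      exact (Label.restrict_mono _ (h₁.output.trans Set.subset_union_left)).trans jn_input
    · rw [label_right hout', label_join]
      exact (Label.restrict_mono _ (h₂.output.trans Set.subset_union_right)).trans jn_input
  · exact sp_input
  · change tau (G.label (G₁.n + G₂.n + 1)).evid ⊆ tau jn.evid
    rw [label_join]

/-- Along a path, the accumulated tamper set stays within the tamper places of the
evidence at the current event. -/
theorem foldl_subset_tau {G : DFG} {s s' : Set Place} (hG : G.TamperSound s s')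
    {a : ℕ} {l : List ℕ} (hl : (a :: l).IsChain (fun a b => (a, b) ∈ G.edges))
    {r : Set Place} (hr : r ⊆ tau (G.label a).evid) {i v : ℕ}
    (hv : (a :: l)[i]? = some v) :
    (l.take i).foldl G.tsStep r ⊆ tau (G.label v).evid := by
  induction i generalizing a l r with
  | zero =>
    obtain rfl : a = v := by simpa using hv
    simpa using hr
  | succ i ih =>
    cases l with
    | nil => simp at hv
    | cons b l =>
      rw [List.isChain_cons_cons] at hl
      rw [List.take_succ_cons, List.foldl_cons]
      refine ih hl.2 ?_ (by simpa using hv)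
      rw [DFG.tsStep_eq_restrict]
      exact (Label.restrict_mono _ hr).trans (hG.edge hl.1)

theorem ts_subset_tau {G : DFG} {s s' : Set Place} (hG : G.TamperSound s s')
    {π : List ℕ} (hπ : G.IsPath π) {i v : ℕ} (hv : π[i]? = some v) :
    G.ts (π.take (i + 1)) ⊆ tau (G.label v).evid := by
  obtain ⟨hne, hlt, hchain⟩ := hπ
  cases π with
  | nil => exact absurd rfl hne
  | cons a l =>
    rw [List.take_succ_cons]
    refine hG.foldl_subset_tau hchain ?_ hv
    have hmeas := hG.meas (hlt a List.mem_cons_self)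
    split
    next q e heq => rw [hmeas ⟨q, e, heq⟩]
    next => exact Set.empty_subset _

end DFG.TamperSound

theorem tau_subset_tau_splitEv {d : Split} (hd : d = .plus) (e : Evidence) :
    tau e ⊆ tau (splitEv d e) := by
  subst hd
  exact subset_rfl

theorem sem_tamperSound (t : Phrase) (p : Place) (φ : List ℕ) (e : Evidence) :
    (sem t p φ e).TamperSound (tau e) (tau (eval t p φ e)) := by
  induction t generalizing p φ e with
  | meas m q s => exact .single (fun _ => rfl) (Set.subset_univ _)
  | copy => exact .single (by rintro ⟨_, _, ⟨⟩⟩) subset_rfl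
  | sign => exact .single (by rintro ⟨_, _, ⟨⟩⟩) subset_rfl
  | hash => exact .single (by rintro ⟨_, _, ⟨⟩⟩) subset_rfl
  | att q t ih =>
    exact .seqComp (.single (by rintro ⟨_, _, ⟨⟩⟩) subset_rfl)
      (.seqComp (ih q (1 :: φ) e) (.single (by rintro ⟨_, _, ⟨⟩⟩) subset_rfl))
  | lseq t₁ t₂ ih₁ ih₂ => exact .seqComp (ih₁ _ _ _) (ih₂ _ _ _)
  | bseq d₁ d₂ t₁ t₂ ih₁ ih₂ =>
    exact .branch (ih₁ _ _ _) (ih₂ _ _ _) (by rintro ⟨_, _, ⟨⟩⟩) (by rintro ⟨_, _, ⟨⟩⟩)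
      subset_rfl subset_rfl (tau_subset_tau_splitEv · e) (tau_subset_tau_splitEv · e)
  | bpar d₁ d₂ t₁ t₂ ih₁ ih₂ =>
    exact .branch (ih₁ _ _ _) (ih₂ _ _ _) (by rintro ⟨_, _, ⟨⟩⟩) (by rintro ⟨_, _, ⟨⟩⟩)
      subset_rfl subset_rfl (tau_subset_tau_splitEv · e) (tau_subset_tau_splitEv · e)

end Copland

open Copland in
/-- Evidence-centric criterion for protection: if every cross-place communication
event `v` of `D = C(t,p,φ,e)` satisfies `τ(ε(v)) ⊆ {ϱ(v)}`, then `D` is protected. -/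
theorem protected_of_cross_place_sub (t : Phrase) (p : Place) (φ : List ℕ)
    (e : Evidence)
    (h : ∀ v, v < (sem t p φ e).n → ((sem t p φ e).label v).IsCross →
      tau (((sem t p φ e).label v).evid) ⊆ {((sem t p φ e).label v).place}) :
    (sem t p φ e).Protected := by
  intro π hπ
  refine .inr fun i v _ _ hv hcross => ?_
  exact ((sem_tamperSound t p φ e).ts_subset_tau hπ hv).trans
    (h v (hπ.2.1 v (List.mem_of_getElem? hv)) hcross)
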